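/- arXiv:1503.05259 — 11 statements merged into one kernel-verified Lean document; each statement's English description precedes it below -/
import Mathlib

section
/- Let n ≥ 1, let k ∈ ℝⁿ be a nonzero vector, and let c1 > 0, c2 ≥ 0, c3 > 0 and φ_ρ, φ_u be real numbers. Then the characteristic polynomial of the 2n×2n real matrix M_k (defined in the context) factors as det(X·I − M_k) = X^{n−1} · (X + c1|k|² + φ_u)^{n−1} · (X² + ((c1+c2)|k|² + φ_u)·X + c3·(1+φ_ρ)·|k|²). -/
open Polynomial Matrix

/-!
Since the top blocks of the characteristic matrix of `M_k` are `X • 1` and `-1`, block column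
elimination reduces its `2n × 2n` determinant to an `n × n` one (`det_fromBlocks_neg_one₁₂`), namely
`det (X (X + a) • 1 + (c2 X + c3 (1 + φρ)) • k ⊗ k)` with `a = c1 |k|² + φu`. This is a rank-one
perturbation of a scalar matrix, so by `det_smul_one_add_vecMulVec` it equals
`(X (X + a)) ^ (n - 1) * (X (X + a) + (c2 X + c3 (1 + φρ)) |k|²)`.
-/

/-- Right multiplication by the unimodular matrix `[[1, 0], [A - 1, 1]]` turns the top-left block
into `1`, and the Schur complement of that block is then `C + D * A`. -/
lemma det_fromBlocks_neg_one₁₂ {R m : Type*} [CommRing R] [Fintype m] [DecidableEq m]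
    (A C D : Matrix m m R) :
    (Matrix.fromBlocks A (-1) C D).det = (C + D * A).det := by
  have h : Matrix.fromBlocks A (-1) C D * Matrix.fromBlocks 1 0 (A - 1) 1
      = Matrix.fromBlocks 1 (-1) (C + D * (A - 1)) D := by
    rw [Matrix.fromBlocks_multiply]
    congr 1 <;> simp
  have h2 := congrArg Matrix.det h
  rw [Matrix.det_mul, Matrix.det_fromBlocks_zero₁₂, Matrix.det_fromBlocks_one₁₁] at h2
  simp only [Matrix.det_one, mul_one] at h2
  rw [h2]
  congr 1
  noncomm_ring

/-- The left side is the characteristic polynomial of `-(u ⊗ v)` evaluated at `q`. -/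
lemma det_smul_one_add_vecMulVec {R : Type*} [CommRing R] (n : ℕ) (hn : 1 ≤ n)
    (q : R) (u v : Fin n → R) :
    (q • (1 : Matrix (Fin n) (Fin n) R) + Matrix.vecMulVec u v).det
      = q ^ (n - 1) * (q + u ⬝ᵥ v) := by
  have h := congrArg (Polynomial.eval q) (Matrix.charpoly_vecMulVec (-u) v)
  rw [Matrix.eval_charpoly, Matrix.neg_vecMulVec, sub_neg_eq_add, Matrix.scalar_apply,
    ← Matrix.smul_one_eq_diagonal] at h
  rw [h]
  obtain ⟨m, rfl⟩ : ∃ m, n = m + 1 := ⟨n - 1, by lia⟩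
  simp
  ring

/-- The characteristic polynomial of the 2n×2n mode matrix `M_k`
factors as `X^(n-1) * (X + c1|k|² + φu)^(n-1)
  * (X² + ((c1+c2)|k|² + φu)·X + c3(1+φρ)|k|²)`. -/
theorem charpoly_Mk (n : ℕ) (hn : 1 ≤ n) (k : Fin n → ℝ) (hk : k ≠ 0)
    (c1 c2 c3 φρ φu : ℝ) (hc1 : 0 < c1) (hc2 : 0 ≤ c2) (hc3 : 0 < c3) :
    (Matrix.fromBlocks
        (0 : Matrix (Fin n) (Fin n) ℝ) (1 : Matrix (Fin n) (Fin n) ℝ)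
        ((-(c3 * (1 + φρ))) • Matrix.vecMulVec k k)
        ((-(c1 * (∑ j, k j ^ 2) + φu)) • (1 : Matrix (Fin n) (Fin n) ℝ)
          - c2 • Matrix.vecMulVec k k)).charpoly
      = X ^ (n - 1) * (X + C (c1 * (∑ j, k j ^ 2) + φu)) ^ (n - 1)
        * (X ^ 2 + C ((c1 + c2) * (∑ j, k j ^ 2) + φu) * X
            + C (c3 * (1 + φρ) * (∑ j, k j ^ 2))) := by
  -- The scalars `a` and `b` stand for `c1 |k|² + φu` and `c3 (1 + φρ)`, so that `simp` does not expand them.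
  have hM : ∀ a b : ℝ, (Matrix.fromBlocks (0 : Matrix (Fin n) (Fin n) ℝ) 1
      ((-b) • Matrix.vecMulVec k k)
      ((-a) • (1 : Matrix (Fin n) (Fin n) ℝ) - c2 • Matrix.vecMulVec k k)).charpoly
      = (X * (X + C a)) ^ (n - 1)
        * (X * (X + C a) + (C c2 * X + C b) * C (∑ j, k j ^ 2)) := by
    intro a b
    have hS : -((-b) • Matrix.vecMulVec k k).map C
        + Matrix.charmatrix ((-a) • (1 : Matrix (Fin n) (Fin n) ℝ) - c2 • Matrix.vecMulVec k k)
          * Matrix.charmatrix 0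
        = (X * (X + C a)) • (1 : Matrix (Fin n) (Fin n) ℝ[X])
          + Matrix.vecMulVec (fun i => (C c2 * X + C b) * C (k i)) (fun i => C (k i)) := by
      have h0 : Matrix.charmatrix (0 : Matrix (Fin n) (Fin n) ℝ)
          = (X : ℝ[X]) • (1 : Matrix (Fin n) (Fin n) ℝ[X]) := by
        simp [Matrix.charmatrix, Matrix.smul_one_eq_diagonal]
      rw [h0]
      ext1 i j
      by_cases hij : i = j <;>
        simp [Matrix.vecMulVec_apply, hij] <;> ring
    rw [Matrix.charpoly, Matrix.charmatrix_fromBlocks,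
      Matrix.map_one C (map_zero C) (map_one C), det_fromBlocks_neg_one₁₂, hS,
      det_smul_one_add_vecMulVec n hn]
    congr 2
    simp only [dotProduct, map_sum, map_pow, Finset.mul_sum]
    exact Finset.sum_congr rfl fun i _ => by ring
  rw [hM, mul_pow]
  simp only [map_add, map_mul]
  ring
end

section
/- Let n ≥ 1, let k ∈ ℝⁿ be nonzero, let c1 > 0, c2 ≥ 0, φ_ρ, φ_u ∈ ℝ, and let c4, c5 ∈ ℂ with c4·c5 = c3 for some real c3 > 0. Then: (i) for every w ∈ ℝⁿ orthogonal to k, the vector (0, w) ∈ ℂ^{n+1} satisfies N_k·(0,w) = −(c1|k|²+φ_u)·(0,w); and (ii) for every root λ ∈ ℂ of the quadratic X² + ((c1+c2)|k|² + φ_u)·X + c3(1+φ_ρ)|k|² = 0, the vector (c4(1+φ_ρ)|k|², λ·k) ∈ ℂ^{n+1} is an eigenvector of N_k with eigenvalue λ. -/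
open Matrix

/-!
Write `s = |k|²`, `b = c4 (1 + φρ)` and `a = c1 s + φu`. The matrix acts on a block vector `(x, v)` by
`N_k (x, v) = (b (k·v), -c5 x k - a v - c2 (k·v) k)`, which is `block_mulVec` below.
If `k·v = 0` and `x = 0`, only `-a v` survives. For `x = b s` and `v = λ k` one has `k·v = λ s`, so
the scalar entry is `λ b s`, and the vector entry is `-(c4 c5 (1 + φρ) s + (a + c2 s) λ) k`,
which equals `λ² k` by the quadratic equation for `λ` and `c4 c5 = c3`.
-/

/-- Action of the block matrix on `(x, v)`, in terms of the bilinear (not sesquilinear) product `k ⬝ᵥ v`. -/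
lemma block_mulVec {n : ℕ} (b c a d x : ℂ) (k v : Fin n → ℂ) :
    (Matrix.fromBlocks (0 : Matrix Unit Unit ℂ)
        (Matrix.of fun (_ : Unit) (j : Fin n) => b * k j)
        (Matrix.of fun (i : Fin n) (_ : Unit) => c * k i)
        (a • (1 : Matrix (Fin n) (Fin n) ℂ) - d • Matrix.vecMulVec k k)).mulVec
      (Sum.elim (fun _ => x) v)
    = Sum.elim (fun _ => b * (k ⬝ᵥ v)) (fun i => c * k i * x + a * v i - d * (k ⬝ᵥ v) * k i) := by
  rw [Matrix.fromBlocks_mulVec]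
  ext (i | i)
  · simp [Matrix.mulVec, dotProduct, Finset.mul_sum, mul_assoc]
  · simp only [Sum.elim_inr, Sum.elim_comp_inl, Sum.elim_comp_inr, Pi.add_apply,
      Matrix.sub_mulVec, Matrix.smul_mulVec, Matrix.one_mulVec, Matrix.vecMulVec_mulVec,
      Pi.sub_apply, Pi.smul_apply, smul_eq_mul, MulOpposite.smul_eq_mul_unop,
      MulOpposite.unop_op]
    simp [Matrix.mulVec, dotProduct]
    ring

/-- (i) for `w ⊥ k`, the vector `(0, w)` satisfies
`N_k (0,w) = -(c1|k|²+φu) (0,w)`; (ii) for every root `λ` of the quadratic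
`X² + ((c1+c2)|k|² + φu)X + c3(1+φρ)|k|² = 0`, the vector
`(c4(1+φρ)|k|², λk)` is an eigenvector of `N_k` with eigenvalue `λ`. -/
theorem Nk_eigenvectors (n : ℕ) (hn : 1 ≤ n) (k : Fin n → ℝ) (hk : k ≠ 0)
    (c1 c2 c3 φρ φu : ℝ) (hc1 : 0 < c1) (hc2 : 0 ≤ c2) (hc3 : 0 < c3)
    (c4 c5 : ℂ) (hc45 : c4 * c5 = (c3 : ℂ)) :
    let N : Matrix (Unit ⊕ Fin n) (Unit ⊕ Fin n) ℂ :=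
      Matrix.fromBlocks
        (0 : Matrix Unit Unit ℂ)
        (Matrix.of fun (_ : Unit) (j : Fin n) => c4 * (1 + (φρ : ℂ)) * (k j : ℂ))
        (Matrix.of fun (i : Fin n) (_ : Unit) => -c5 * (k i : ℂ))
        ((-(((c1 * (∑ j, k j ^ 2) + φu) : ℝ) : ℂ)) • (1 : Matrix (Fin n) (Fin n) ℂ)
          - ((c2 : ℝ) : ℂ) • Matrix.vecMulVec (fun j => ((k j : ℝ) : ℂ))
              (fun j => ((k j : ℝ) : ℂ)))
    (∀ w : Fin n → ℝ, (∑ j, k j * w j) = 0 →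
      N.mulVec (Sum.elim (fun _ => 0) (fun j => ((w j : ℝ) : ℂ)))
        = (-(((c1 * (∑ j, k j ^ 2) + φu) : ℝ) : ℂ)) •
            Sum.elim (fun _ => 0) (fun j => ((w j : ℝ) : ℂ))) ∧
    (∀ lam : ℂ,
      lam ^ 2 + ((((c1 + c2) * (∑ j, k j ^ 2) + φu) : ℝ) : ℂ) * lam
        + (((c3 * (1 + φρ) * (∑ j, k j ^ 2)) : ℝ) : ℂ) = 0 →
      N.mulVec (Sum.elim (fun _ => c4 * (1 + (φρ : ℂ)) * ((∑ j, k j ^ 2 : ℝ) : ℂ))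
          (fun j => lam * ((k j : ℝ) : ℂ)))
        = lam • Sum.elim (fun _ => c4 * (1 + (φρ : ℂ)) * ((∑ j, k j ^ 2 : ℝ) : ℂ))
            (fun j => lam * ((k j : ℝ) : ℂ))) := by
  intro N
  constructor
  · intro w hw
    have h : (fun j => ((k j : ℝ) : ℂ)) ⬝ᵥ (fun j => ((w j : ℝ) : ℂ)) = 0 := by
      simpa [dotProduct] using congrArg (fun r : ℝ => (r : ℂ)) hw
    rw [block_mulVec, h]
    ext (i | i) <;> simp
  · intro lam hlam
    have h : (fun j => ((k j : ℝ) : ℂ)) ⬝ᵥ (fun j => lam * ((k j : ℝ) : ℂ))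
        = lam * ((∑ j, k j ^ 2 : ℝ) : ℂ) := by
      simp only [dotProduct, Complex.ofReal_sum, Complex.ofReal_pow, Finset.mul_sum]
      exact Finset.sum_congr rfl fun j _ => by ring
    rw [block_mulVec, h]
    generalize (∑ j, k j ^ 2) = s at *
    push_cast at hlam
    ext (i | i)
    · simp only [Sum.elim_inl, Pi.smul_apply, smul_eq_mul]
      ring
    · simp only [Sum.elim_inr, Pi.smul_apply, smul_eq_mul]
      push_cast
      linear_combination (-(k i : ℂ)) * hlam - (1 + (φρ : ℂ)) * s * k i * hc45
end

section
/- Let D > 0, let c1 > 0, c2 ≥ 0, c3 > 0, let k ∈ ℝⁿ be nonzero, and define φ_u = max{0, D − c1|k|², 2D − (c1+c2)|k|²} and φ_ρ = max{0, ((c1+c2)|k|² + φ_u)²/(4 c3 |k|²) − 1}. Then the discriminant Δ = ((c1+c2)|k|² + φ_u)² − 4 c3 (1+φ_ρ) |k|² satisfies Δ ≤ 0, and every complex root of the quadratic X² + ((c1+c2)|k|² + φ_u)·X + c3(1+φ_ρ)|k|² = 0 has real part equal to −((c1+c2)|k|² + φ_u)/2, which is ≤ −D. -/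
/-!
Each entry of a maximum bounds it from below. The entry `2D − (c1+c2)|k|²` of `φu` gives
`(c1+c2)|k|² + φu ≥ 2D`, and the second entry of `φρ`, multiplied by `4 c3 |k|² > 0` (as `k ≠ 0`),
is exactly the nonpositivity of the discriminant. The roots are then a conjugate pair or a double
real root, so their real part is that of the vertex (`re_eq_of_discrim_nonpos`).
-/

/-- A root of a real quadratic with nonpositive discriminant lies on the vertical line
through the vertex: its imaginary part is nonzero, so that `2 * z.re + B = 0`, or it is a real
root, and then `(2 * z.re + B) ^ 2` is the discriminant. -/
theorem re_eq_of_discrim_nonpos (B C : ℝ) (h : B ^ 2 - 4 * C ≤ 0) (z : ℂ)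
    (hz : z ^ 2 + (B : ℂ) * z + (C : ℂ) = 0) : z.re = -B / 2 := by
  have hre := congrArg Complex.re hz
  have him := congrArg Complex.im hz
  simp [pow_two] at hre him
  have him' : z.im * (2 * z.re + B) = 0 := by linarith
  rcases mul_eq_zero.mp him' with h0 | h0
  · rw [h0] at hre
    have hsq : (2 * z.re + B) ^ 2 = 0 := le_antisymm (by nlinarith) (sq_nonneg _)
    have := pow_eq_zero_iff two_ne_zero |>.mp hsq
    linarith
  · linarith

/-- With the observer feedback choices
`φu = max{0, D − c1|k|², 2D − (c1+c2)|k|²}` and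
`φρ = max{0, ((c1+c2)|k|² + φu)²/(4c3|k|²) − 1}`, the discriminant is ≤ 0 and every
complex root of the mode quadratic has real part `−((c1+c2)|k|² + φu)/2 ≤ −D`. -/
theorem feedback_choice_velocity_obs (n : ℕ) (k : Fin n → ℝ) (hk : k ≠ 0)
    (D c1 c2 c3 : ℝ) (hD : 0 < D) (hc1 : 0 < c1) (hc2 : 0 ≤ c2) (hc3 : 0 < c3) :
    let K : ℝ := ∑ j, k j ^ 2
    let φu : ℝ := max 0 (max (D - c1 * K) (2 * D - (c1 + c2) * K))
    let φρ : ℝ := max 0 (((c1 + c2) * K + φu) ^ 2 / (4 * c3 * K) - 1)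
    ((c1 + c2) * K + φu) ^ 2 - 4 * c3 * (1 + φρ) * K ≤ 0 ∧
    -(((c1 + c2) * K + φu)) / 2 ≤ -D ∧
    ∀ z : ℂ, z ^ 2 + ((((c1 + c2) * K + φu) : ℝ) : ℂ) * z
        + (((c3 * (1 + φρ) * K) : ℝ) : ℂ) = 0 →
      z.re = -(((c1 + c2) * K + φu)) / 2 := by
  intro K φu φρ
  have hK : 0 < K := by
    obtain ⟨j, hj⟩ := Function.ne_iff.mp hk
    exact Finset.sum_pos' (fun i _ => sq_nonneg _) ⟨j, Finset.mem_univ j, sq_pos_of_ne_zero hj⟩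
  have hu : 2 * D - (c1 + c2) * K ≤ φu := (le_max_right _ _).trans (le_max_right _ _)
  have hρ : ((c1 + c2) * K + φu) ^ 2 / (4 * c3 * K) - 1 ≤ φρ := le_max_right _ _
  have hdisc : ((c1 + c2) * K + φu) ^ 2 - 4 * c3 * (1 + φρ) * K ≤ 0 := by
    have h4 : 0 < 4 * c3 * K := by positivity
    have h := (div_le_iff₀ h4).mp (sub_le_iff_le_add.mp hρ)
    linarith
  refine ⟨hdisc, by linarith, fun z hz => ?_⟩
  exact re_eq_of_discrim_nonpos _ _ (by linarith) z hz
end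

section
/- (Proposition 3.1, mode-level form.) Let n ≥ 1, D > 0, c1 > 0, c2 ≥ 0, c3 > 0, let c4, c5 ∈ ℂ with c4·c5 = c3, let k ∈ ℝⁿ be nonzero, and set φ_u = max{0, D − c1|k|², 2D − (c1+c2)|k|²} and φ_ρ = max{0, ((c1+c2)|k|² + φ_u)²/(4 c3 |k|²) − 1}. Then every eigenvalue of the (n+1)×(n+1) complex matrix N_k has real part ≤ −D. -/
open Matrix

/-!
Let `(ρ, u)` be an eigenvector of `N_k` for `μ`, and let `s = k · u` be the longitudinal part of `u`.
The density row gives `μ ρ = c4 (1 + φρ) s`, and pairing the velocity rows with `k` gives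
`μ s = -c5 |k|² ρ - A s` with `A = (c1 + c2) |k|² + φu`.

* If `s ≠ 0`, eliminating `ρ` gives `μ² + A μ + B = 0` with `B = c3 (1 + φρ) |k|²`. The choice of
  `φρ` makes the discriminant `A² - 4 B` nonpositive, so `Re μ = -A / 2`, which is at most `-D` by
  the choice of `φu`.
* If `s = 0`, then `ρ = 0` because `c5 |k|² ≠ 0`, so `u` is a nonzero transversal vector and
  `μ = -(c1 |k|² + φu) ≤ -D`.
-/

/-- A root of a real monic quadratic with nonpositive discriminant has real part `-A / 2`. -/
lemma re_eq_of_quadratic {A B : ℝ} (hAB : A ^ 2 ≤ 4 * B) {μ : ℂ}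
    (h : μ ^ 2 + (A : ℂ) * μ + (B : ℂ) = 0) : μ.re = -A / 2 := by
  have hre := congrArg Complex.re h
  have him := congrArg Complex.im h
  simp [pow_two] at hre him
  have hprod : μ.im * (2 * μ.re + A) = 0 := by linarith
  rcases mul_eq_zero.mp hprod with h0 | h0
  · rw [h0] at hre
    have hsq : (μ.re + A / 2) ^ 2 = 0 := le_antisymm (by nlinarith) (sq_nonneg _)
    have := pow_eq_zero_iff (two_ne_zero) |>.mp hsq
    linarith
  · linarith

/-- Proposition 3.1, mode-level form: with the feedback choices
`φu = max{0, D − c1|k|², 2D − (c1+c2)|k|²}` and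
`φρ = max{0, ((c1+c2)|k|² + φu)²/(4c3|k|²) − 1}`, every eigenvalue of the
mode matrix `N_k` has real part at most `−D`. -/
theorem Nk_eigenvalues_decay (n : ℕ) (hn : 1 ≤ n) (D : ℝ) (hD : 0 < D)
    (c1 c2 c3 : ℝ) (hc1 : 0 < c1) (hc2 : 0 ≤ c2) (hc3 : 0 < c3)
    (c4 c5 : ℂ) (hc45 : c4 * c5 = (c3 : ℂ))
    (k : Fin n → ℝ) (hk : k ≠ 0) :
    let K : ℝ := ∑ j, k j ^ 2
    let φu : ℝ := max 0 (max (D - c1 * K) (2 * D - (c1 + c2) * K))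
    let φρ : ℝ := max 0 (((c1 + c2) * K + φu) ^ 2 / (4 * c3 * K) - 1)
    let N : Matrix (Unit ⊕ Fin n) (Unit ⊕ Fin n) ℂ :=
      Matrix.fromBlocks
        (0 : Matrix Unit Unit ℂ)
        (Matrix.of fun (_ : Unit) (j : Fin n) => c4 * (1 + (φρ : ℂ)) * (k j : ℂ))
        (Matrix.of fun (i : Fin n) (_ : Unit) => -c5 * (k i : ℂ))
        ((-(((c1 * K + φu) : ℝ) : ℂ)) • (1 : Matrix (Fin n) (Fin n) ℂ)
          - ((c2 : ℝ) : ℂ) • Matrix.vecMulVec (fun j => ((k j : ℝ) : ℂ))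
              (fun j => ((k j : ℝ) : ℂ)))
    ∀ μ : ℂ, Module.End.HasEigenvalue N.mulVecLin μ → μ.re ≤ -D := by
  intro K φu φρ N μ hμ
  have hK : 0 < K := by
    obtain ⟨j, hj⟩ := Function.ne_iff.mp hk
    exact Finset.sum_pos' (fun i _ => sq_nonneg _) ⟨j, Finset.mem_univ _, sq_pos_of_ne_zero hj⟩
  have hu1 : D - c1 * K ≤ φu := (le_max_left _ _).trans (le_max_right _ _)
  have hu2 : 2 * D - (c1 + c2) * K ≤ φu := (le_max_right _ _).trans (le_max_right _ _)
  have hρ : ((c1 + c2) * K + φu) ^ 2 / (4 * c3 * K) - 1 ≤ φρ := le_max_right _ _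
  have hB : ((c1 + c2) * K + φu) ^ 2 ≤ 4 * (c3 * (1 + φρ) * K) := by
    rw [sub_le_iff_le_add, div_le_iff₀ (by positivity)] at hρ
    linarith
  have hc5 : c5 ≠ 0 := by
    rintro rfl
    rw [mul_zero] at hc45
    exact hc3.ne (by exact_mod_cast hc45)
  obtain ⟨v, hv⟩ := hμ.exists_hasEigenvector
  have hNv : N *ᵥ v = μ • v := hv.apply_eq_smul
  have hv0 : v ≠ 0 := hv.2
  clear_value φu φρ
  set s : ℂ := ∑ j, (k j : ℂ) * v (Sum.inr j) with hs
  set ρ : ℂ := v (Sum.inl ()) with hρdef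
  have hKc : ∑ j, (k j : ℂ) * (k j : ℂ) = (K : ℂ) := by
    simp [K, pow_two]
  have hrow : c4 * (1 + (φρ : ℂ)) * s = μ * ρ := by
    have h := congrFun hNv (Sum.inl ())
    simp only [N, Matrix.mulVec, dotProduct, Fintype.sum_sum_type, Matrix.fromBlocks_apply₁₁,
      Matrix.fromBlocks_apply₁₂, Matrix.of_apply, Matrix.zero_apply, zero_mul,
      Finset.sum_const_zero, zero_add, Pi.smul_apply, smul_eq_mul] at h
    rw [← h, hs, Finset.mul_sum]
    exact Finset.sum_congr rfl fun j _ => by ring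
  have hvel (i : Fin n) : -c5 * (k i : ℂ) * ρ - ((c1 * K + φu : ℝ) : ℂ) * v (Sum.inr i)
      - (c2 : ℂ) * (k i : ℂ) * s = μ * v (Sum.inr i) := by
    have h := congrFun hNv (Sum.inr i)
    simp only [N, Matrix.mulVec, dotProduct, Fintype.sum_sum_type, Matrix.fromBlocks_apply₂₁,
      Matrix.fromBlocks_apply₂₂, Matrix.of_apply, Matrix.sub_apply, Matrix.smul_apply,
      Matrix.vecMulVec_apply, Matrix.one_apply, Pi.smul_apply, smul_eq_mul, sub_mul,
      Finset.sum_sub_distrib, Finset.univ_unique, Finset.sum_singleton, mul_ite, ite_mul, mul_one,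
      mul_zero, zero_mul, Finset.sum_ite_eq, Finset.mem_univ, if_true] at h
    have hsum : ∑ x, (c2 : ℂ) * ((k i : ℂ) * (k x : ℂ)) * v (Sum.inr x)
        = (c2 : ℂ) * (k i : ℂ) * s := by
      rw [hs, Finset.mul_sum]
      exact Finset.sum_congr rfl fun j _ => by ring
    rw [hsum] at h
    linear_combination h
  have hlong : -c5 * (K : ℂ) * ρ - (((c1 + c2) * K + φu : ℝ) : ℂ) * s = μ * s := by
    calc _ = -c5 * ρ * (∑ j, (k j : ℂ) * (k j : ℂ)) - ((c1 * K + φu : ℝ) : ℂ) * s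
          - (c2 : ℂ) * s * (∑ j, (k j : ℂ) * (k j : ℂ)) := by rw [hKc]; push_cast; ring
      _ = ∑ i, (k i : ℂ) * (-c5 * (k i : ℂ) * ρ - ((c1 * K + φu : ℝ) : ℂ) * v (Sum.inr i)
          - (c2 : ℂ) * (k i : ℂ) * s) := by
        conv_lhs => enter [1, 2]; rw [hs]
        simp only [Finset.mul_sum, ← Finset.sum_sub_distrib]
        exact Finset.sum_congr rfl fun j _ => by ring
      _ = μ * s := by
        simp only [hvel]
        rw [hs, Finset.mul_sum]
        exact Finset.sum_congr rfl fun j _ => by ring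
  by_cases hs0 : s = 0
  · have hρ0 : ρ = 0 := by
      rw [hs0] at hlong
      have hKc0 : (K : ℂ) ≠ 0 := by exact_mod_cast hK.ne'
      simpa [hc5, hKc0] using hlong
    obtain ⟨i, hi⟩ : ∃ i, v (Sum.inr i) ≠ 0 := by
      by_contra! hall
      apply hv0
      funext x
      rcases x with ⟨⟩ | i
      · exact hρ0
      · exact hall i
    have h := hvel i
    rw [hs0, hρ0] at h
    have hμeq : μ = ((-(c1 * K + φu) : ℝ) : ℂ) := by
      apply mul_right_cancel₀ hi
      rw [← h]
      push_cast
      ring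
    rw [hμeq, Complex.ofReal_re]
    linarith
  · have hquad : μ ^ 2 + (((c1 + c2) * K + φu : ℝ) : ℂ) * μ + ((c3 * (1 + φρ) * K : ℝ) : ℂ)
        = 0 := by
      apply mul_right_cancel₀ hs0
      have e : ((c3 * (1 + φρ) * K : ℝ) : ℂ) = c4 * c5 * (1 + (φρ : ℂ)) * (K : ℂ) := by
        rw [hc45]; push_cast; ring
      rw [e]
      linear_combination (-μ) * hlong + c5 * (K : ℂ) * hrow
    rw [re_eq_of_quadratic hB hquad]
    linarith
end

section
/- (Decay of a Fourier mode of the observer error, Proposition 3.1.) Let n ≥ 1, D > 0, c1 > 0, c2 ≥ 0, c3 > 0, c4, c5 ∈ ℂ with c4·c5 = c3, let k ∈ ℝⁿ be nonzero, and set φ_u = max{0, D − c1|k|², 2D − (c1+c2)|k|²} and φ_ρ = max{0, ((c1+c2)|k|² + φ_u)²/(4 c3 |k|²) − 1}. Let y : ℝ → ℂ^{n+1} be differentiable with y'(t) = N_k · y(t) for all t ≥ 0. Then for every ε with 0 < ε < D there exists a constant C ≥ 0 such that ‖y(t)‖ ≤ C · e^{−(D−ε)·t} for all t ≥ 0. 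-/
/-!
Write `y = (a, v)` with `a` the density and `v` the velocity component, `w = ∑ j, k j * v j`,
`α = c1 K + φu ≥ D` and `β = (c1 + c2) K + φu ≥ 2 D`. The system splits into two parts.

* The transversal part `u = K v - w k` solves `u' = -α u`, hence decays like `exp (-α t)`.
* The longitudinal part is a damped oscillator: with `b = a' = c4 (1 + φρ) w` one has
  `b' = -M a - β b`, where `M = c3 (1 + φρ) K`. The choice of `φρ` says exactly that
  `β² ≤ 4 M`, so the characteristic roots have real part `-β / 2 ≤ -D`. They may coincide, whence
  the loss of `ε`. In place of diagonalising, put `f = b + (β / 2) a` and `m = M - β² / 4 ≥ 0`; the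
  energy `E = |f|² + (m + ε²) |a|²` satisfies `E' = -β E + 2 ε² Re (conj a * f) ≤ -(β - ε) E`.

Since `v` is a linear combination of `u`, `a` and `f`, all coordinates of `y` are
`O (exp (-(D - ε) t))` on `[0, ∞)`, which is phrased with `=O` along the principal filter.
-/

open Asymptotics Filter

/-- Energy method: if `E' ≤ -2 r E` on `[0, ∞)`, then `E ≤ E 0 * exp (-2 r t)` there, so anything
whose square is controlled by `E` decays at rate `r`. -/
lemma isBigO_exp_of_energy (E E' : ℝ → ℝ) (r : ℝ)
    (hE : ∀ t, 0 ≤ t → HasDerivAt E (E' t) t) (hE' : ∀ t, 0 ≤ t → E' t ≤ -(2 * r) * E t)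
    (g : ℝ → ℂ) (c : ℝ) (hc : 0 ≤ c) (hg : ∀ t, 0 ≤ t → ‖g t‖ ^ 2 ≤ c * E t) :
    g =O[𝓟 (Set.Ici 0)] fun t => Real.exp (-r * t) := by
  have hd : ∀ t, 0 ≤ t → HasDerivAt (fun t => E t * Real.exp (2 * r * t))
      (E' t * Real.exp (2 * r * t) + E t * (Real.exp (2 * r * t) * (2 * r))) t := by
    intro t ht
    have h1 : HasDerivAt (fun t : ℝ => 2 * r * t) (2 * r) t := by
      simpa using (hasDerivAt_id t).const_mul (2 * r)
    exact (hE t ht).mul h1.exp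
  have hanti : AntitoneOn (fun t => E t * Real.exp (2 * r * t)) (Set.Ici 0) := by
    apply antitoneOn_of_deriv_nonpos (convex_Ici 0)
    · exact fun t ht => (hd t ht).continuousAt.continuousWithinAt
    · intro t ht
      rw [interior_Ici] at ht
      exact (hd t (le_of_lt ht)).differentiableAt.differentiableWithinAt
    · intro t ht
      rw [interior_Ici] at ht
      rw [(hd t (le_of_lt ht)).deriv]
      have := hE' t (le_of_lt ht)
      nlinarith [Real.exp_pos (2 * r * t)]
  have h0 : 0 ≤ c * E 0 := (sq_nonneg _).trans (hg 0 le_rfl)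
  rw [isBigO_principal]
  refine ⟨Real.sqrt (c * E 0), fun t ht => ?_⟩
  have h1 : E t * Real.exp (2 * r * t) ≤ E 0 := by
    simpa using hanti (Set.mem_Ici.2 le_rfl) ht ht
  rw [Real.norm_of_nonneg (Real.exp_pos _).le]
  refine le_of_sq_le_sq ?_ (by positivity)
  rw [mul_pow, Real.sq_sqrt h0]
  have h2 : Real.exp (2 * r * t) * Real.exp (-r * t) ^ 2 = 1 := by
    rw [pow_two, ← Real.exp_add, ← Real.exp_add]
    simp; ring
  calc ‖g t‖ ^ 2 ≤ c * E t := hg t ht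
    _ = c * (E t * Real.exp (2 * r * t)) * Real.exp (-r * t) ^ 2 := by
        linear_combination (-c * E t) * h2
    _ ≤ c * E 0 * Real.exp (-r * t) ^ 2 := by gcongr

lemma isBigO_exp_of_scalar (z : ℝ → ℂ) (α r : ℝ) (hr : r ≤ α)
    (hz : ∀ t, 0 ≤ t → HasDerivAt z (-(α : ℂ) * z t) t) :
    z =O[𝓟 (Set.Ici 0)] fun t => Real.exp (-r * t) := by
  refine isBigO_exp_of_energy (fun t => ‖z t‖ ^ 2) _ r (fun t ht => (hz t ht).norm_sq) ?_ z 1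
    zero_le_one (fun t _ => by simp)
  intro t _
  simp only [Complex.inner, ← Complex.normSq_eq_norm_sq, Complex.normSq_apply]
  simp
  nlinarith [mul_self_nonneg (z t).re, mul_self_nonneg (z t).im]

/-- Damped oscillator `a' = f - (β/2) a`, `f' = -m a - (β/2) f` with `m ≥ 0`: the bound for both
components comes from the energy `|f|² + (m + ε²) |a|²`. -/
lemma isBigO_exp_of_oscillator (a f : ℝ → ℂ) (β m D ε : ℝ) (hβ : 2 * D ≤ β) (hm : 0 ≤ m)
    (hε : 0 < ε)
    (ha : ∀ t, 0 ≤ t → HasDerivAt a (f t - (β / 2 : ℝ) * a t) t)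
    (hf : ∀ t, 0 ≤ t → HasDerivAt f (-(m : ℂ) * a t - (β / 2 : ℝ) * f t) t) :
    a =O[𝓟 (Set.Ici 0)] (fun t => Real.exp (-(D - ε) * t)) ∧
    f =O[𝓟 (Set.Ici 0)] (fun t => Real.exp (-(D - ε) * t)) := by
  have hE : ∀ t, 0 ≤ t → HasDerivAt (fun t => ‖f t‖ ^ 2 + (m + ε ^ 2) * ‖a t‖ ^ 2) _ t :=
    fun t ht => (hf t ht).norm_sq.add ((ha t ht).norm_sq.const_mul (m + ε ^ 2))
  have key := isBigO_exp_of_energy _ _ (D - ε) hE (by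
    intro t _
    simp only [Complex.inner, ← Complex.normSq_eq_norm_sq, Complex.normSq_apply]
    simp
    have h1 := sq_nonneg ((f t).re - ε * (a t).re)
    have h2 := sq_nonneg ((f t).im - ε * (a t).im)
    have h3 : 0 ≤ (f t).re ^ 2 + (f t).im ^ 2 + (m + ε ^ 2) * ((a t).re ^ 2 + (a t).im ^ 2) := by
      positivity
    have h4 : 0 ≤ m * ((a t).re ^ 2 + (a t).im ^ 2) := by positivity
    have h5 := mul_nonneg (sub_nonneg.2 hβ) h3
    have h6 := mul_nonneg hε.le h3
    have h7 := mul_nonneg hε.le h1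
    have h8 := mul_nonneg hε.le h2
    have h9 := mul_nonneg hε.le h4
    nlinarith)
  constructor
  · refine key a (1 / ε ^ 2) (by positivity) fun t _ => ?_
    rw [one_div, ← div_eq_inv_mul, le_div_iff₀ (by positivity)]
    nlinarith [sq_nonneg ‖f t‖, mul_nonneg hm (sq_nonneg ‖a t‖)]
  · refine key f 1 zero_le_one fun t _ => ?_
    have : 0 ≤ (m + ε ^ 2) * ‖a t‖ ^ 2 := by positivity
    linarith


open Matrix

/-- Proposition 3.1, decay of a Fourier mode of the observer error:
any solution of `y' = N_k y` (with the feedback choices of Proposition 3.1)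
satisfies `‖y(t)‖ ≤ C e^{−(D−ε)t}` for every `0 < ε < D` and a suitable `C ≥ 0`. -/
theorem mode_error_decay (n : ℕ) (hn : 1 ≤ n) (D : ℝ) (hD : 0 < D)
    (c1 c2 c3 : ℝ) (hc1 : 0 < c1) (hc2 : 0 ≤ c2) (hc3 : 0 < c3)
    (c4 c5 : ℂ) (hc45 : c4 * c5 = (c3 : ℂ))
    (k : Fin n → ℝ) (hk : k ≠ 0)
    (K φu φρ : ℝ)
    (hK : K = ∑ j, k j ^ 2)
    (hφu : φu = max 0 (max (D - c1 * K) (2 * D - (c1 + c2) * K)))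
    (hφρ : φρ = max 0 (((c1 + c2) * K + φu) ^ 2 / (4 * c3 * K) - 1))
    (N : Matrix (Unit ⊕ Fin n) (Unit ⊕ Fin n) ℂ)
    (hN : N = Matrix.fromBlocks
        (0 : Matrix Unit Unit ℂ)
        (Matrix.of fun (_ : Unit) (j : Fin n) => c4 * (1 + (φρ : ℂ)) * (k j : ℂ))
        (Matrix.of fun (i : Fin n) (_ : Unit) => -c5 * (k i : ℂ))
        ((-(((c1 * K + φu) : ℝ) : ℂ)) • (1 : Matrix (Fin n) (Fin n) ℂ)
          - ((c2 : ℝ) : ℂ) • Matrix.vecMulVec (fun j => ((k j : ℝ) : ℂ))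
              (fun j => ((k j : ℝ) : ℂ))))
    (y : ℝ → EuclideanSpace ℂ (Unit ⊕ Fin n))
    (hy : Differentiable ℝ y)
    (hy' : ∀ t : ℝ, 0 ≤ t → HasDerivAt y (Matrix.toEuclideanLin N (y t)) t) :
    ∀ ε : ℝ, 0 < ε → ε < D → ∃ C : ℝ, 0 ≤ C ∧
      ∀ t : ℝ, 0 ≤ t → ‖y t‖ ≤ C * Real.exp (-(D - ε) * t) := by
  intro ε hε hεD
  have hKpos : 0 < K := by
    obtain ⟨i, hi⟩ := Function.ne_iff.1 hk
    rw [hK]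
    exact Finset.sum_pos' (fun j _ => sq_nonneg _) ⟨i, Finset.mem_univ _, by
      have : k i ≠ 0 := hi
      positivity⟩
  have hKC : (K : ℂ) = ∑ j, (k j : ℂ) ^ 2 := by rw [hK]; push_cast; rfl
  have hK0 : (K : ℂ) ≠ 0 := by exact_mod_cast hKpos.ne'
  have hφ1 : D - c1 * K ≤ φu := by rw [hφu]; simp
  have hφ2 : 2 * D - (c1 + c2) * K ≤ φu := by rw [hφu]; simp
  have hρ0 : 0 ≤ φρ := by rw [hφρ]; simp
  have hρ1 : ((c1 + c2) * K + φu) ^ 2 / (4 * c3 * K) - 1 ≤ φρ := by rw [hφρ]; simp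
  set β : ℝ := (c1 + c2) * K + φu with hβ
  have hm : 0 ≤ c3 * (1 + φρ) * K - β ^ 2 / 4 := by
    have h : β ^ 2 / (4 * c3 * K) ≤ 1 + φρ := by linarith
    rw [div_le_iff₀ (by positivity)] at h
    linarith
  have hc4 : c4 ≠ 0 := by
    rintro rfl
    rw [zero_mul] at hc45
    exact hc3.ne (by exact_mod_cast hc45)
  have hρC : (1 + (φρ : ℂ)) ≠ 0 := by
    have : 1 + φρ ≠ 0 := by positivity
    exact_mod_cast this
  set a : ℝ → ℂ := fun t => y t (Sum.inl ()) with ha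
  set v : Fin n → ℝ → ℂ := fun i t => y t (Sum.inr i) with hv
  set w : ℝ → ℂ := fun t => ∑ j, (k j : ℂ) * v j t with hw
  have hcoord : ∀ (i : Unit ⊕ Fin n) (t : ℝ), 0 ≤ t →
      HasDerivAt (fun t => y t i) (∑ j, N i j * y t j) t := fun i t ht =>
    (((EuclideanSpace.proj i : EuclideanSpace ℂ (Unit ⊕ Fin n) →L[ℂ] ℂ).restrictScalars
      ℝ).hasFDerivAt.comp_hasDerivAt t (hy' t ht))
  have hda : ∀ t, 0 ≤ t → HasDerivAt a (c4 * (1 + φρ) * w t) t := by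
    intro t ht
    refine (hcoord (Sum.inl ()) t ht).congr_deriv ?_
    simp [hN, hw, hv, Finset.mul_sum, mul_assoc]
  have hdv : ∀ i t, 0 ≤ t → HasDerivAt (v i)
      (-c5 * k i * a t - ((c1 * K + φu : ℝ) : ℂ) * v i t - c2 * k i * w t) t := by
    intro i t ht
    refine (hcoord (Sum.inr i) t ht).congr_deriv ?_
    simp only [hN, hw, hv, ha, Fintype.sum_sum_type, Matrix.fromBlocks_apply₂₁,
      Matrix.fromBlocks_apply₂₂, Matrix.sub_apply, Matrix.smul_apply, Matrix.one_apply,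
      Matrix.vecMulVec_apply, Matrix.of_apply, sub_mul, Finset.sum_sub_distrib, smul_eq_mul,
      Finset.mul_sum]
    simp [mul_assoc]
    ring
  have hdw : ∀ t, 0 ≤ t → HasDerivAt w (-c5 * K * a t - (β : ℂ) * w t) t := by
    intro t ht
    have h := HasDerivAt.fun_sum (u := Finset.univ)
      fun i _ => (hdv i t ht).const_mul (k i : ℂ)
    refine h.congr_deriv ?_
    symm
    have e : ∀ i, (k i : ℂ) * (-c5 * k i * a t - ((c1 * K + φu : ℝ) : ℂ) * v i t
        - c2 * k i * w t) = (k i : ℂ) ^ 2 * (-c5 * a t - c2 * w t)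
          - ((c1 * K + φu : ℝ) : ℂ) * (k i * v i t) := fun i => by ring
    simp only [e, Finset.sum_sub_distrib, ← Finset.sum_mul, ← Finset.mul_sum, ← hKC]
    change _ = _ - _ * w t
    rw [hβ]
    push_cast
    ring
  have hu : ∀ i, (fun t => (K : ℂ) * v i t - k i * w t) =O[𝓟 (Set.Ici 0)]
      fun t => Real.exp (-(D - ε) * t) := by
    intro i
    refine isBigO_exp_of_scalar _ (c1 * K + φu) _ (by linarith) fun t ht => ?_
    refine (((hdv i t ht).const_mul (K : ℂ)).sub
      ((hdw t ht).const_mul (k i : ℂ))).congr_deriv ?_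
    rw [hβ]
    push_cast
    ring
  obtain ⟨hOa, hOf⟩ := isBigO_exp_of_oscillator a
    (fun t => c4 * (1 + φρ) * w t + (β / 2 : ℝ) * a t) β (c3 * (1 + φρ) * K - β ^ 2 / 4) D ε
    (by linarith) hm hε
    (fun t ht => by
      refine (hda t ht).congr_deriv ?_
      ring)
    (fun t ht => by
      refine (((hdw t ht).const_mul (c4 * (1 + (φρ : ℂ)))).add
        ((hda t ht).const_mul ((β / 2 : ℝ) : ℂ))).congr_deriv ?_
      push_cast
      linear_combination (-(1 + (φρ : ℂ)) * K * a t) * hc45)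
  have hOw : w =O[𝓟 (Set.Ici 0)] fun t => Real.exp (-(D - ε) * t) := by
    refine ((hOf.sub (hOa.const_mul_left ((β / 2 : ℝ) : ℂ))).const_mul_left
      (c4 * (1 + (φρ : ℂ)))⁻¹).congr_left fun t => ?_
    field_simp
    ring
  have hOv : ∀ i, v i =O[𝓟 (Set.Ici 0)] fun t => Real.exp (-(D - ε) * t) := by
    intro i
    refine (((hu i).add (hOw.const_mul_left (k i : ℂ))).const_mul_left
      (K : ℂ)⁻¹).congr_left fun t => ?_
    field_simp
    ring
  have hOy : y =O[𝓟 (Set.Ici 0)] fun t => Real.exp (-(D - ε) * t) := by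
    have hpi : (fun t => WithLp.ofLp (y t)) =O[𝓟 (Set.Ici 0)]
        fun t => Real.exp (-(D - ε) * t) := by
      rw [isBigO_pi]
      rintro (⟨⟩ | i)
      · exact hOa
      · exact hOv i
    exact ((PiLp.continuousLinearEquiv 2 ℂ
      fun _ : Unit ⊕ Fin n => ℂ).symm.toContinuousLinearMap.isBigO_comp _ _).trans hpi
  obtain ⟨C, hC, hb⟩ := hOy.exists_nonneg
  refine ⟨C, hC, fun t ht => ?_⟩
  have := isBigOWith_principal.1 hb t ht
  rwa [Real.norm_of_nonneg (Real.exp_pos _).le] at this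
end

section
/- (Proposition 3.2, mode-level form.) Let n ≥ 1, D > 0, c1 > 0, c2 ≥ 0, c3 > 0, c4, c5 ∈ ℂ with c4·c5 = c3, let k ∈ ℝⁿ be nonzero, and set ψ_ρ = max{0, 2D − (c1+c2)|k|²} and ψ_u = max{0, ((c1+c2)|k|² − ψ_ρ)²/(4 c3 |k|²) − 1}. Then every eigenvalue of the (n+1)×(n+1) complex matrix N̄_k has real part ≤ −min{D, c1|k|²}. -/
/-!
For an eigenvector `(a, w)` put `s = k · w`. Pairing the eigenvector equation with `k` shows that
`(a, s)` satisfies a closed two-dimensional system, with characteristic polynomial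
`(X + ψρ)(X + (c1 + c2)K) + c3 (1 + ψu) K`. If `(a, s) ≠ 0`, then `μ` is a root of it. The choice of
`ψu` makes its discriminant nonpositive, so `Re μ = -(ψρ + (c1 + c2)K) / 2`, which is at most `-D` by
the choice of `ψρ` (`re_eq_of_quadratic`). If `(a, s) = 0`, then `w ≠ 0` is transverse to `k` and is
damped by `-c1 K` alone, so `μ = -c1 K`.
-/

open Matrix

/-- The roots of a real monic quadratic with nonpositive discriminant lie on the line through
the midpoint; here the quadratic is written as `(X + p)(X + q) + r`. -/
lemma re_eq_of_quadratic_s10 {p q r : ℝ} (h : (q - p) ^ 2 ≤ 4 * r) {μ : ℂ}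
    (hμ : (μ + p) * (μ + q) + r = 0) : μ.re = -(p + q) / 2 := by
  have hre := congrArg Complex.re hμ
  have him := congrArg Complex.im hμ
  simp only [Complex.add_re, Complex.add_im, Complex.mul_re, Complex.mul_im, Complex.ofReal_re,
    Complex.ofReal_im, Complex.zero_re, Complex.zero_im, add_zero] at hre him
  have hprod : (2 * μ.re + p + q) * μ.im = 0 := by linarith
  rcases mul_eq_zero.mp hprod with h0 | h0
  · linarith
  -- A real root makes the discriminant a square, that of `2 μ + p + q`, hence zero.
  · rw [h0] at hre
    have hsq : (2 * μ.re + p + q) ^ 2 = 0 :=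
      le_antisymm (by nlinarith) (sq_nonneg _)
    have := pow_eq_zero_iff (two_ne_zero) |>.mp hsq
    linarith

/-- Proposition 3.2, mode-level form: with the feedback choices
`ψρ = max{0, 2D − (c1+c2)|k|²}` and
`ψu = max{0, ((c1+c2)|k|² − ψρ)²/(4c3|k|²) − 1}`, every eigenvalue of the
density-observation mode matrix `N̄_k` has real part at most `−min{D, c1|k|²}`. -/
theorem Nbar_eigenvalues_decay (n : ℕ) (hn : 1 ≤ n) (D : ℝ) (hD : 0 < D)
    (c1 c2 c3 : ℝ) (hc1 : 0 < c1) (hc2 : 0 ≤ c2) (hc3 : 0 < c3)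
    (c4 c5 : ℂ) (hc45 : c4 * c5 = (c3 : ℂ))
    (k : Fin n → ℝ) (hk : k ≠ 0) :
    let K : ℝ := ∑ j, k j ^ 2
    let ψρ : ℝ := max 0 (2 * D - (c1 + c2) * K)
    let ψu : ℝ := max 0 (((c1 + c2) * K - ψρ) ^ 2 / (4 * c3 * K) - 1)
    let Nbar : Matrix (Unit ⊕ Fin n) (Unit ⊕ Fin n) ℂ :=
      Matrix.fromBlocks
        (Matrix.of fun (_ : Unit) (_ : Unit) => (-(ψρ : ℂ)))
        (Matrix.of fun (_ : Unit) (j : Fin n) => c4 * (k j : ℂ))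
        (Matrix.of fun (i : Fin n) (_ : Unit) => -c5 * (1 + (ψu : ℂ)) * (k i : ℂ))
        ((-((c1 * K : ℝ) : ℂ)) • (1 : Matrix (Fin n) (Fin n) ℂ)
          - ((c2 : ℝ) : ℂ) • Matrix.vecMulVec (fun j => ((k j : ℝ) : ℂ))
              (fun j => ((k j : ℝ) : ℂ)))
    ∀ μ : ℂ, Module.End.HasEigenvalue Nbar.mulVecLin μ → μ.re ≤ -min D (c1 * K) := by
  intro K ψρ ψu Nbar μ hμ
  have hK : 0 < K := by
    obtain ⟨j, hj⟩ := Function.ne_iff.mp hk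
    exact Finset.sum_pos' (fun i _ => sq_nonneg _) ⟨j, Finset.mem_univ j, by
      have : k j ≠ 0 := hj
      positivity⟩
  obtain ⟨v, hv⟩ := hμ.exists_hasEigenvector
  have hvec : Nbar *ᵥ v = μ • v := hv.apply_eq_smul
  set a : ℂ := v (Sum.inl ()) with ha
  set w : Fin n → ℂ := fun j => v (Sum.inr j) with hw
  set s : ℂ := ∑ j, (k j : ℂ) * w j with hs
  clear_value s
  have e0 : -(ψρ : ℂ) * a + c4 * s = μ * a := by
    have := congrFun hvec (Sum.inl ())
    simpa [Nbar, Matrix.mulVec, dotProduct, Fintype.sum_sum_type, hs, Finset.mul_sum, mul_assoc,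
      ha, hw] using this
  have e1 : ∀ i, -c5 * (1 + (ψu : ℂ)) * k i * a - (c1 * K : ℂ) * w i - c2 * k i * s = μ * w i := by
    intro i
    have := congrFun hvec (Sum.inr i)
    simp only [Nbar, Matrix.mulVec, dotProduct, Fintype.sum_sum_type, Matrix.fromBlocks_apply₂₁,
      Matrix.fromBlocks_apply₂₂, Matrix.of_apply, Matrix.sub_apply, Matrix.smul_apply,
      Matrix.one_apply, Matrix.vecMulVec_apply, Pi.smul_apply, smul_eq_mul, sub_mul,
      Finset.sum_sub_distrib, Finset.univ_unique, Finset.sum_singleton, mul_ite, ite_mul,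
      mul_one, mul_zero, zero_mul, Finset.sum_ite_eq, Finset.mem_univ, if_true] at this
    have hsum : ∑ j, (c2 : ℂ) * ((k i : ℂ) * k j) * v (Sum.inr j) = c2 * k i * s := by
      rw [hs, Finset.mul_sum]
      exact Finset.sum_congr rfl fun j _ => by simp only [hw]; ring
    rw [hsum] at this
    push_cast at this
    linear_combination this
  have hKc : ∑ j, (k j : ℂ) * k j = (K : ℂ) := by
    simp only [K, Complex.ofReal_sum, Complex.ofReal_mul, sq]
  have e2 : -c5 * (1 + (ψu : ℂ)) * K * a - (c1 + c2) * K * s = μ * s := by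
    have h : ∑ i, (k i : ℂ) * (-c5 * (1 + (ψu : ℂ)) * k i * a - (c1 * K : ℂ) * w i - c2 * k i * s)
        = ∑ i, (k i : ℂ) * (μ * w i) := Finset.sum_congr rfl fun i _ => by rw [e1 i]
    have hl : ∑ i, (k i : ℂ) *
        (-c5 * (1 + (ψu : ℂ)) * k i * a - (c1 * K : ℂ) * w i - c2 * k i * s)
        = (-c5 * (1 + (ψu : ℂ)) * a - c2 * s) * ∑ j, (k j : ℂ) * k j
          - (c1 * K : ℂ) * ∑ j, (k j : ℂ) * w j := by
      rw [Finset.mul_sum _ (fun j => (k j : ℂ) * k j), Finset.mul_sum _ (fun j => (k j : ℂ) * w j),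
        ← Finset.sum_sub_distrib]
      exact Finset.sum_congr rfl fun i _ => by ring
    have hr : ∑ i, (k i : ℂ) * (μ * w i) = μ * s := by
      rw [hs, Finset.mul_sum]
      exact Finset.sum_congr rfl fun i _ => by ring
    rw [hl, hr, hKc, ← hs] at h
    linear_combination h
  by_cases has : a = 0 ∧ s = 0
  · obtain ⟨ha0, hs0⟩ := has
    have hex : ∃ i, w i ≠ 0 := by
      by_contra! hall
      apply hv.2
      ext x
      rcases x with x | i
      · exact ha0
      · exact hall i
    obtain ⟨i, hi⟩ := hex
    have hμeq : μ = ((-(c1 * K) : ℝ) : ℂ) := by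
      apply mul_right_cancel₀ hi
      have := e1 i
      rw [ha0, hs0] at this
      push_cast
      linear_combination -this
    rw [hμeq, Complex.ofReal_re]
    exact neg_le_neg (min_le_right _ _)
  · have hQ : (μ + ψρ) * (μ + ((c1 + c2) * K : ℝ)) + (c3 * (1 + ψu) * K : ℝ) = 0 := by
      push_cast
      -- Eliminating one unknown from the system for `(a, s)` leaves the characteristic
      -- polynomial times the other; the unknown kept is one that is nonzero.
      by_cases ha0 : a = 0
      · have hs0 : s ≠ 0 := fun h => has ⟨ha0, h⟩
        apply mul_right_cancel₀ hs0
        linear_combination (-(μ + ψρ)) * e2 + c5 * (1 + ψu) * K * e0 - (1 + ψu) * K * s * hc45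
      · apply mul_right_cancel₀ ha0
        linear_combination (-(μ + (c1 + c2) * K)) * e0 - c4 * e2 - (1 + ψu) * K * a * hc45
    have hdisc : ((c1 + c2) * K - ψρ) ^ 2 ≤ 4 * (c3 * (1 + ψu) * K) := by
      have h1 : ((c1 + c2) * K - ψρ) ^ 2 / (4 * c3 * K) - 1 ≤ ψu := le_max_right _ _
      have h2 : ((c1 + c2) * K - ψρ) ^ 2 / (4 * c3 * K) ≤ 1 + ψu := by linarith
      rw [div_le_iff₀ (by positivity)] at h2
      linarith
    have hre := re_eq_of_quadratic_s10 hdisc hQ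
    have hρ : 2 * D - (c1 + c2) * K ≤ ψρ := le_max_right _ _
    have := min_le_left D (c1 * K)
    linarith
end

section
/- Let D > 0, c1 > 0, c2 ≥ 0, c3 > 0, let k ∈ ℝⁿ be nonzero, and set ψ_ρ = max{0, 2D − (c1+c2)|k|²} and ψ_u = max{0, ((c1+c2)|k|² − ψ_ρ)²/(4 c3 |k|²) − 1}. Then the discriminant Δ̄ = ((c1+c2)|k|² − ψ_ρ)² − 4 c3 (1+ψ_u)|k|² satisfies Δ̄ ≤ 0, and every complex root of the quadratic X² + ((c1+c2)|k|² + ψ_ρ)·X + ((c1+c2)|k|²·ψ_ρ + c3(1+ψ_u)|k|²) = 0 has real part equal to −((c1+c2)|k|² + ψ_ρ)/2, which is ≤ −D. -/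
/-!
A real monic quadratic `X² + pX + q` with discriminant `p² - 4q ≤ 0` has two conjugate (possibly
equal) roots, both of real part `-p/2`. Here `p² - 4q` is exactly `Δ̄`, because
`(a + ψρ)² - 4aψρ = (a - ψρ)²` with `a = (c1+c2)|k|²`. The choice of `ψu` makes `4c3(1+ψu)|k|²`
at least `(a - ψρ)²`, so `Δ̄ ≤ 0`, and the choice of `ψρ` makes `a + ψρ ≥ 2D`.
-/

theorem re_eq_of_quadratic_root_of_discrim_nonpos {p q : ℝ} (h : p ^ 2 - 4 * q ≤ 0) {z : ℂ}
    (hz : z ^ 2 + (p : ℂ) * z + (q : ℂ) = 0) : z.re = -p / 2 := by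
  have hre := congrArg Complex.re hz
  have him := congrArg Complex.im hz
  simp [pow_two] at hre him
  have him' : z.im * (2 * z.re + p) = 0 := by linarith
  rcases mul_eq_zero.mp him' with h0 | h0
  · -- A real root forces `(2x + p)² = p² - 4q ≤ 0`.
    rw [h0] at hre
    have h1 : (2 * z.re + p) ^ 2 ≤ 0 := by nlinarith
    have h2 : 2 * z.re + p = 0 := pow_eq_zero_iff (two_ne_zero) |>.mp (le_antisymm h1 (sq_nonneg _))
    linarith
  · linarith

/-- With the density-observation feedback choices
`ψρ = max{0, 2D − (c1+c2)|k|²}` and `ψu = max{0, ((c1+c2)|k|² − ψρ)²/(4c3|k|²) − 1}`,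
the discriminant `Δ̄` is ≤ 0, and every complex root of the quadratic
`X² + ((c1+c2)|k|² + ψρ)X + ((c1+c2)|k|²ψρ + c3(1+ψu)|k|²)` has real part
`−((c1+c2)|k|² + ψρ)/2 ≤ −D`. -/
theorem feedback_choice_density_obs (n : ℕ) (k : Fin n → ℝ) (hk : k ≠ 0)
    (D c1 c2 c3 : ℝ) (hD : 0 < D) (hc1 : 0 < c1) (hc2 : 0 ≤ c2) (hc3 : 0 < c3) :
    let K : ℝ := ∑ j, k j ^ 2
    let ψρ : ℝ := max 0 (2 * D - (c1 + c2) * K)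
    let ψu : ℝ := max 0 (((c1 + c2) * K - ψρ) ^ 2 / (4 * c3 * K) - 1)
    ((c1 + c2) * K - ψρ) ^ 2 - 4 * c3 * (1 + ψu) * K ≤ 0 ∧
    -(((c1 + c2) * K + ψρ)) / 2 ≤ -D ∧
    ∀ z : ℂ, z ^ 2 + ((((c1 + c2) * K + ψρ) : ℝ) : ℂ) * z
        + ((((c1 + c2) * K * ψρ + c3 * (1 + ψu) * K) : ℝ) : ℂ) = 0 →
      z.re = -(((c1 + c2) * K + ψρ)) / 2 := by
  intro K ψρ ψu
  have hK : 0 < K := by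
    obtain ⟨j, hj⟩ := Function.ne_iff.mp hk
    exact Finset.sum_pos' (fun i _ => sq_nonneg (k i))
      ⟨j, Finset.mem_univ j, by simpa using sq_pos_iff.mpr hj⟩
  have hρ : 2 * D - (c1 + c2) * K ≤ ψρ := le_max_right _ _
  have hu : ((c1 + c2) * K - ψρ) ^ 2 / (4 * c3 * K) - 1 ≤ ψu := le_max_right _ _
  have hΔ : ((c1 + c2) * K - ψρ) ^ 2 - 4 * c3 * (1 + ψu) * K ≤ 0 := by
    have h := (div_le_iff₀ (by positivity : 0 < 4 * c3 * K)).mp (sub_le_iff_le_add.mp hu)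
    linarith
  refine ⟨hΔ, by linarith, fun z hz => ?_⟩
  exact re_eq_of_quadratic_root_of_discrim_nonpos (by linarith) hz
end

section
/- (Stationary solutions of the 1D compressible Navier–Stokes equations are constant.) Let ν > 0 and γ > 1. Let ρ, u : ℝ → ℝ be twice continuously differentiable, 1-periodic functions with ρ(x) > 0 for all x, satisfying the stationary one-dimensional compressible Navier–Stokes system: (ρ·u)'(x) = 0 and ρ(x)·u(x)·u'(x) + (ρ^γ)'(x) = ν·u''(x) for all x ∈ ℝ. Then u is constant on ℝ, and ρ is constant on ℝ. -/
/-!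
The mass equation says that `m = ρu` is constant, so the momentum equation integrates once to
`νu' = mu + ρ^γ - C`. Multiplying by `u'` and using `ρu' = -ρ'u`, the right-hand side becomes the
derivative of the periodic function `m u²/2 - m ρ^(γ-1)/(γ-1) - C u`, whose derivative is thus
`ν (u')² ≥ 0`. A monotone periodic function is constant (`eq_of_monotone_periodic`), hence `u' = 0`;
the momentum equation then reduces to `(ρ^γ)' = 0`. No case distinction on `m = 0` is needed.
-/

theorem eq_of_monotone_periodic {E : ℝ → ℝ} (hmono : Monotone E)
    (hper : ∀ x : ℝ, E (x + 1) = E x) (x y : ℝ) : E x = E y := by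
  have hle : ∀ a b : ℝ, E a ≤ E b := by
    intro a b
    obtain ⟨n, hn⟩ := exists_nat_ge (a - b)
    have hp : Function.Periodic E 1 := hper
    have h := hp.nat_mul n b
    rw [mul_one] at h
    exact (hmono (by linarith)).trans h.le
  exact le_antisymm (hle x y) (hle y x)

/-- Stationary solutions of the 1D compressible Navier–Stokes
equations with periodic boundary conditions are constant: if `(ρu)' = 0` and
`ρuu' + (ρ^γ)' = νu''` with `ρ > 0`, `ρ, u` twice continuously differentiable and
1-periodic, then `u` and `ρ` are constant. -/
theorem stationary_1d_CNS_constant (ν γ : ℝ) (hν : 0 < ν) (hγ : 1 < γ)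
    (ρ u : ℝ → ℝ) (hρ : ContDiff ℝ 2 ρ) (hu : ContDiff ℝ 2 u)
    (hρper : ∀ x : ℝ, ρ (x + 1) = ρ x) (huper : ∀ x : ℝ, u (x + 1) = u x)
    (hρpos : ∀ x : ℝ, 0 < ρ x)
    (hmass : ∀ x : ℝ, deriv (fun y => ρ y * u y) x = 0)
    (hmom : ∀ x : ℝ, ρ x * u x * deriv u x + deriv (fun y => ρ y ^ γ) x
        = ν * deriv (deriv u) x) :
    (∀ x y : ℝ, u x = u y) ∧ (∀ x y : ℝ, ρ x = ρ y) := by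
  have hρd : Differentiable ℝ ρ := hρ.differentiable (by norm_num)
  have hud : Differentiable ℝ u := hu.differentiable (by norm_num)
  have hu'd : Differentiable ℝ (deriv u) :=
    (contDiff_succ_iff_deriv.1 (show ContDiff ℝ (1 + 1) u by
      simpa [one_add_one_eq_two] using hu)).2.2.differentiable (by norm_num)
  have hpow : ∀ (p x : ℝ),
      HasDerivAt (fun y => ρ y ^ p) (deriv ρ x * p * ρ x ^ (p - 1)) x := fun p x =>
    (hρd x).hasDerivAt.rpow_const (Or.inl (hρpos x).ne')
  obtain ⟨m, hm⟩ : ∃ m, ∀ x, ρ x * u x = m :=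
    ⟨ρ 0 * u 0, fun x => is_const_of_deriv_eq_zero (hρd.mul hud) hmass x 0⟩
  have hmass' : ∀ x, deriv ρ x * u x + ρ x * deriv u x = 0 := fun x => by
    rw [← hmass x]
    exact ((hρd x).hasDerivAt.mul (hud x).hasDerivAt).deriv.symm
  obtain ⟨C, hC⟩ : ∃ C, ∀ x, m * u x + ρ x ^ γ - ν * deriv u x = C := by
    have hP : ∀ x, HasDerivAt (fun y => m * u y + ρ y ^ γ - ν * deriv u y) 0 x := fun x => by
      refine ((((hud x).hasDerivAt.const_mul m).add (hpow γ x)).sub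
        ((hu'd x).hasDerivAt.const_mul ν)).congr_deriv ?_
      have h := hmom x
      rw [(hpow γ x).deriv, hm x] at h
      linarith
    exact ⟨_, fun x => is_const_of_deriv_eq_zero (fun y => (hP y).differentiableAt)
      (fun y => (hP y).deriv) x 0⟩
  have hE : ∀ x, HasDerivAt
      (fun y => m / 2 * u y ^ 2 - m / (γ - 1) * ρ y ^ (γ - 1) - C * u y)
      (ν * deriv u x ^ 2) x := fun x => by
    refine (((((hud x).hasDerivAt.pow 2).const_mul (m / 2)).sub
      ((hpow (γ - 1) x).const_mul (m / (γ - 1)))).sub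
        ((hud x).hasDerivAt.const_mul C)).congr_deriv ?_
    have hγ' : γ - 1 ≠ 0 := by linarith
    have h1 : ρ x ^ γ = ρ x ^ (γ - 1 - 1) * ρ x * ρ x := by
      rw [← Real.rpow_add_one (hρpos x).ne', ← Real.rpow_add_one (hρpos x).ne']
      congr 1
      ring
    have h2 : m / (γ - 1) * (deriv ρ x * (γ - 1) * ρ x ^ (γ - 1 - 1))
        = m * deriv ρ x * ρ x ^ (γ - 1 - 1) := by
      field_simp
    have h3 := hC x
    rw [h1] at h3
    rw [h2, ← h3, ← hm x]
    push_cast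
    linear_combination (-(ρ x ^ (γ - 1 - 1) * ρ x)) * hmass' x
  have hEconst := eq_of_monotone_periodic
    (monotone_of_deriv_nonneg (fun x => (hE x).differentiableAt) (fun x => by
      rw [(hE x).deriv]
      positivity))
    (fun x => by simp only [huper, hρper])
  have hu' : ∀ x, deriv u x = 0 := fun x => by
    have h0 : ν * deriv u x ^ 2 = 0 :=
      (hE x).unique ((hasDerivAt_const x _).congr_of_eventuallyEq
        (Filter.Eventually.of_forall fun y => hEconst y x))
    simpa [hν.ne'] using h0
  refine ⟨is_const_of_deriv_eq_zero hud hu', fun x y => ?_⟩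
  have hu'' : deriv u = fun _ => 0 := funext hu'
  have hpc : ρ x ^ γ = ρ y ^ γ :=
    is_const_of_deriv_eq_zero (f := fun z => ρ z ^ γ)
      (fun z => (hpow γ z).differentiableAt) (fun z => by simpa [hu''] using hmom z) x y
  exact (Real.rpow_left_inj (hρpos x).le (hρpos y).le (by linarith)).1 hpc
end

section
/- (Optimal nudging decay rate with velocity observations, low modes.) Let a, b ∈ ℝ with 0 < a ≤ b. For x ∈ ℝ with x ≥ 0, consider the quadratic q_x(z) = z² + (a+x)·z + b²/4 over ℂ. Then: (i) for every x ≥ 0, every complex root z of q_x satisfies Re(z) ≥ −b/2 for at least one root (i.e. the maximum of the real parts of the two roots of q_x is ≥ −b/2); and (ii) for x = b − a, both roots of q_x are equal to −b/2. Consequently the best achievable decay rate over all x ≥ 0 is b/2, attained at x = b − a. -/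
/-!
The product of the two roots is `b² / 4` whatever `x` is. If both real parts were below `-b / 2`,
both moduli would exceed `b / 2` and their product would exceed `b² / 4`; so no feedback coefficient
achieves a decay rate above `b / 2`. At `x = b - a` the quadratic is the square `(z + b / 2)²`.
-/

/-- optimal nudging decay rate with velocity observations, low
modes `a ≤ b`: (i) for every `x ≥ 0` some root of `z² + (a+x)z + b²/4` has real
part ≥ `−b/2`; (ii) for `x = b − a` both roots equal `−b/2`. -/
theorem nudging_velocity_low_modes (a b : ℝ) (ha : 0 < a) (hab : a ≤ b) :
    (∀ x : ℝ, 0 ≤ x →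
      ∃ z : ℂ, z ^ 2 + ((a + x : ℝ) : ℂ) * z + ((b ^ 2 / 4 : ℝ) : ℂ) = 0 ∧
        -b / 2 ≤ z.re) ∧
    (∀ z : ℂ, z ^ 2 + ((a + (b - a) : ℝ) : ℂ) * z + ((b ^ 2 / 4 : ℝ) : ℂ) = 0 →
      z = -((b : ℂ)) / 2) := by
  have hb : 0 < b := ha.trans_le hab
  constructor
  · intro x _
    obtain ⟨d, hd⟩ := IsAlgClosed.exists_pow_nat_eq
      (((a + x : ℝ) : ℂ) ^ 2 - (b : ℂ) ^ 2) two_pos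
    -- `d` is a square root of the discriminant: the two roots are `(-(a + x) ± d) / 2`.
    by_contra! h
    have h1 := h ((-((a + x : ℝ) : ℂ) + d) / 2) (by push_cast at hd ⊢; linear_combination hd / 4)
    have h2 := h ((-((a + x : ℝ) : ℂ) - d) / 2) (by push_cast at hd ⊢; linear_combination hd / 4)
    have hprod : ((-((a + x : ℝ) : ℂ) + d) / 2) * ((-((a + x : ℝ) : ℂ) - d) / 2)
        = ((b ^ 2 / 4 : ℝ) : ℂ) := by
      push_cast at hd ⊢; linear_combination -hd / 4
    generalize (-((a + x : ℝ) : ℂ) + d) / 2 = z at h1 hprod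
    generalize (-((a + x : ℝ) : ℂ) - d) / 2 = w at h2 hprod
    have hz : b / 2 < ‖z‖ := by linarith [neg_le_abs z.re, Complex.abs_re_le_norm z]
    have hw : b / 2 < ‖w‖ := by linarith [neg_le_abs w.re, Complex.abs_re_le_norm w]
    have hn : ‖z‖ * ‖w‖ = b ^ 2 / 4 := by
      rw [← norm_mul, hprod, Complex.norm_of_nonneg (by positivity)]
    nlinarith
  · intro z hz
    have hsq : (z + (b : ℂ) / 2) ^ 2 = 0 := by
      push_cast at hz
      linear_combination hz
    linear_combination pow_eq_zero_iff two_ne_zero |>.mp hsq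
end

section
/- (Optimal nudging decay rate with velocity observations, high modes.) Let a, b ∈ ℝ with a > b > 0. For x ∈ ℝ with x ≥ 0, consider the quadratic q_x(z) = z² + (a+x)·z + b²/4 over ℂ. Then for every x ≥ 0 the maximum of the real parts of the two roots of q_x is ≥ (−a + √(a² − b²))/2, and for x = 0 this maximum equals (−a + √(a² − b²))/2. Consequently, for a > b, adding nudging (x > 0) cannot improve the decay rate beyond its value at x = 0. -/
/-!
For `b ≤ s` the quadratic `z² + s z + b²/4` has the two real roots `(-s ± √(s² - b²))/2`
(`quadratic_factor`). The larger one is nondecreasing in `s`: writing `s = a + x`, this is the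
inequality `√(a² - b²) + x ≤ √((a + x)² - b²)` (`sqrt_add_le`), which after squaring reduces to
`√(a² - b²) ≤ a`. Hence increasing the damping from `a` to `a + x` moves the slow root to the right.
-/

theorem quadratic_factor (s b : ℝ) (h : 0 ≤ s ^ 2 - b ^ 2) (z : ℂ) :
    z ^ 2 + (s : ℂ) * z + ((b ^ 2 / 4 : ℝ) : ℂ) =
      (z - (((-s + Real.sqrt (s ^ 2 - b ^ 2)) / 2 : ℝ) : ℂ)) *
        (z - (((-s - Real.sqrt (s ^ 2 - b ^ 2)) / 2 : ℝ) : ℂ)) := by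
  have hs : ((Real.sqrt (s ^ 2 - b ^ 2) : ℝ) : ℂ) ^ 2 = (s : ℂ) ^ 2 - (b : ℂ) ^ 2 := by
    exact_mod_cast Real.sq_sqrt h
  push_cast
  linear_combination (1 / 4 : ℂ) * hs

theorem sqrt_add_le {a b x : ℝ} (hb : 0 < b) (hab : b < a) (hx : 0 ≤ x) :
    Real.sqrt (a ^ 2 - b ^ 2) + x ≤ Real.sqrt ((a + x) ^ 2 - b ^ 2) := by
  have hA : 0 ≤ a ^ 2 - b ^ 2 := by nlinarith
  have hle : Real.sqrt (a ^ 2 - b ^ 2) ≤ a :=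
    Real.sqrt_le_iff.mpr ⟨by linarith, by nlinarith⟩
  apply Real.le_sqrt_of_sq_le
  nlinarith [Real.sq_sqrt hA, mul_le_mul_of_nonneg_left hle hx]

/-- optimal nudging decay rate with velocity observations, high
modes `a > b`: for every `x ≥ 0` the maximum real part of the roots of
`z² + (a+x)z + b²/4` is ≥ `(−a + √(a² − b²))/2`, and for `x = 0` this maximum is
attained: some root has exactly this real part and all roots have real part ≤ it. -/
theorem nudging_velocity_high_modes (a b : ℝ) (hb : 0 < b) (hab : b < a) :
    (∀ x : ℝ, 0 ≤ x →
      ∃ z : ℂ, z ^ 2 + ((a + x : ℝ) : ℂ) * z + ((b ^ 2 / 4 : ℝ) : ℂ) = 0 ∧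
        (-a + Real.sqrt (a ^ 2 - b ^ 2)) / 2 ≤ z.re) ∧
    (∃ z : ℂ, z ^ 2 + ((a + 0 : ℝ) : ℂ) * z + ((b ^ 2 / 4 : ℝ) : ℂ) = 0 ∧
      z.re = (-a + Real.sqrt (a ^ 2 - b ^ 2)) / 2) ∧
    (∀ z : ℂ, z ^ 2 + ((a + 0 : ℝ) : ℂ) * z + ((b ^ 2 / 4 : ℝ) : ℂ) = 0 →
      z.re ≤ (-a + Real.sqrt (a ^ 2 - b ^ 2)) / 2) := by
  have hA : 0 ≤ a ^ 2 - b ^ 2 := by nlinarith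
  simp only [add_zero]
  refine ⟨fun x hx => ⟨(((-(a + x) + Real.sqrt ((a + x) ^ 2 - b ^ 2)) / 2 : ℝ) : ℂ), ?_, ?_⟩,
    ⟨(((-a + Real.sqrt (a ^ 2 - b ^ 2)) / 2 : ℝ) : ℂ), ?_, Complex.ofReal_re _⟩, fun z hz => ?_⟩
  · rw [quadratic_factor (a + x) b (by nlinarith), sub_self, zero_mul]
  · rw [Complex.ofReal_re]
    linarith [sqrt_add_le hb hab hx]
  · rw [quadratic_factor a b hA, sub_self, zero_mul]
  · rw [quadratic_factor a b hA, mul_eq_zero, sub_eq_zero, sub_eq_zero] at hz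
    rcases hz with rfl | rfl
    · rw [Complex.ofReal_re]
    · rw [Complex.ofReal_re]
      linarith [Real.sqrt_nonneg (a ^ 2 - b ^ 2)]
end

section
/- (Optimal nudging decay rate with density observations.) Let a, b ∈ ℝ with a > 0 and b > 0. For x ∈ ℝ with x ≥ 0, consider the quadratic q_x(z) = z² + (a+x)·z + (a·x + b²/4) over ℂ. Then: (i) for every x ≥ 0 the maximum of the real parts of the two roots of q_x is ≥ −(a + b/2); and (ii) for x = a + b, both roots of q_x are equal to −(a + b/2). Consequently the best achievable decay rate over all x ≥ 0 is a + b/2, attained at x = a + b. -/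
/-! The discriminant of the quadratic is `(x - a)² - b²`. If `x ≤ a + b`, the root with the larger
real part has real part at least the mean `-(a + x)/2` of the roots, hence at least `-(a + b/2)`.
If `x > a + b`, the discriminant is at least `(x - a - b)²`, so the larger (real) root is at least
`(-(a + x) + (x - a - b))/2 = -(a + b/2)`. At `x = a + b` the quadratic is `(z + (a + b/2))²`. -/

/-- optimal nudging decay rate with density observations:
(i) for every `x ≥ 0` some root of `z² + (a+x)z + (ax + b²/4)` has real part
≥ `−(a + b/2)`; (ii) for `x = a + b` both roots equal `−(a + b/2)`. -/
theorem nudging_density (a b : ℝ) (ha : 0 < a) (hb : 0 < b) :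
    (∀ x : ℝ, 0 ≤ x →
      ∃ z : ℂ, z ^ 2 + ((a + x : ℝ) : ℂ) * z + ((a * x + b ^ 2 / 4 : ℝ) : ℂ) = 0 ∧
        -(a + b / 2) ≤ z.re) ∧
    (∀ z : ℂ, z ^ 2 + ((a + (a + b) : ℝ) : ℂ) * z
        + ((a * (a + b) + b ^ 2 / 4 : ℝ) : ℂ) = 0 →
      z = -(((a + b / 2 : ℝ) : ℂ))) := by
  refine ⟨fun x _ => ?_, fun z hz => ?_⟩
  · rcases le_total x (a + b) with hx | hx
    · obtain ⟨s, hs, hre⟩ : ∃ s : ℂ, s ^ 2 = (((x - a) ^ 2 - b ^ 2 : ℝ) : ℂ) ∧ 0 ≤ s.re := by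
        obtain ⟨s, hs⟩ := IsAlgClosed.exists_pow_nat_eq (((x - a) ^ 2 - b ^ 2 : ℝ) : ℂ) two_pos
        rcases le_total 0 s.re with h | h
        · exact ⟨s, hs, h⟩
        · exact ⟨-s, by rw [neg_sq, hs], by simpa using h⟩
      refine ⟨((-(a + x) / 2 : ℝ) : ℂ) + ((1 / 2 : ℝ) : ℂ) * s, ?_, ?_⟩
      · push_cast at hs ⊢
        linear_combination (1 / 4) * hs
      · rw [Complex.add_re, Complex.ofReal_re, Complex.re_ofReal_mul]
        linarith
    · have hD : (x - a - b) ^ 2 ≤ (x - a) ^ 2 - b ^ 2 := by nlinarith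
      have hs := Real.sq_sqrt ((sq_nonneg _).trans hD)
      have hle := Real.le_sqrt_of_sq_le hD
      refine ⟨(((-(a + x) + √((x - a) ^ 2 - b ^ 2)) / 2 : ℝ) : ℂ), ?_, ?_⟩
      · norm_cast
        linear_combination (1 / 4) * hs
      · rw [Complex.ofReal_re]
        linarith
  · have h : (z + ((a + b / 2 : ℝ) : ℂ)) ^ 2 = 0 := by
      push_cast at hz ⊢
      linear_combination hz
    exact eq_neg_of_add_eq_zero_left (pow_eq_zero_iff two_ne_zero |>.mp h)
end
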